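/- arXiv:1910.12247 — 2 statements merged into one kernel-verified Lean document; each statement's English description precedes it below -/
import Mathlib

section
/- For a positive integer n ≥ 3, the number of divisors of n is at most 2^{1.6 · ln n / ln ln n}. -/
/-!
For each `k`, the ratio `d(n) / n ^ (1 / k)` is multiplicative in `n` and is maximised prime by
prime, as in Ramanujan's theory of superior highly composite numbers. So
`log d(n) ≤ log n / k + C k`, where only primes up to `2 ^ k` contribute to the best constant `C k`.
For `k ≤ 6` this constant is computed; for `k ≥ 8` a linear bound on the prime counting function and
partial summation give `C k ≤ 7 / 9 * 2 ^ k / k`. Now let `2 ^ k` be comparable to `log n`.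
Once `log (log n)` is replaced by a tangent to `log` at a power of two, the required inequality
is quadratic and convex in `log n`, so that it need only be checked at the ends of an interval.
-/

open Finset
open Real (log log_le_sub_one_of_pos)
open Nat (primesLE primeCounting)

/-- The exponent of the prime `p` in the number maximising `d(n) ^ k / n`. It is
`⌊1 / (p ^ (1 / k) - 1)⌋`, the largest `b` with `(1 + 1 / b) ^ k ≥ p`, written without real powers
so that it can be evaluated; the search stops at `2 * k` because `(1 + 1 / b) ^ k < 2` beyond. -/
def optimalExponent (k p : ℕ) : ℕ :=
  Nat.findGreatest (fun b ↦ b ^ k * p ≤ (b + 1) ^ k) (2 * k)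

/-- The factor at the prime `p` of the maximum of `d(n) / n ^ (1 / k)`, on a logarithmic scale. -/
noncomputable def primeExcess (k p : ℕ) : ℝ :=
  log (optimalExponent k p + 1) - optimalExponent k p * (log p / k)

/-- The maximum of `log d(n) - log n / k` over `n`. Primes beyond `2 ^ k` have optimal exponent `0`
and do not contribute. -/
noncomputable def logExcess (k : ℕ) : ℝ :=
  ∑ p ∈ primesLE (2 ^ k), primeExcess k p

section OptimalExponent

variable {k p : ℕ}

lemma pow_mul_le_succ_pow_of_le {a b : ℕ} (hab : a ≤ b) (hb : b ^ k * p ≤ (b + 1) ^ k) :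
    a ^ k * p ≤ (a + 1) ^ k := by
  rcases Nat.eq_zero_or_pos b with rfl | hb0
  · rwa [Nat.le_zero.1 hab]
  refine Nat.le_of_mul_le_mul_right ?_ (pow_pos hb0 k)
  calc a ^ k * p * b ^ k = a ^ k * (b ^ k * p) := by ring
    _ ≤ a ^ k * (b + 1) ^ k := by gcongr
    _ = (a * (b + 1)) ^ k := (mul_pow ..).symm
    _ ≤ ((a + 1) * b) ^ k := by gcongr ?_ ^ k; linarith
    _ = (a + 1) ^ k * b ^ k := mul_pow ..

lemma succ_pow_lt_pow_mul {b : ℕ} (hp : 2 ≤ p) (hb : 2 * k < b) : (b + 1) ^ k < b ^ k * p := by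
  have hkb : (2 * k : ℝ) + 1 ≤ b := by exact_mod_cast hb
  have hb0 : (0 : ℝ) < b + 1 := by positivity
  have bernoulli : 1 + k * (-1 / (b + 1) : ℝ) ≤ (1 + -1 / (b + 1)) ^ k :=
    one_add_mul_le_pow (by rw [le_div_iff₀ hb0]; linarith) k
  have half_lt : (1 / 2 : ℝ) < b ^ k / (b + 1) ^ k := by
    calc (1 / 2 : ℝ) < 1 + k * (-1 / (b + 1)) := by
          rw [← sub_pos]; field_simp; linarith
      _ ≤ (1 + -1 / (b + 1)) ^ k := bernoulli
      _ = b ^ k / (b + 1) ^ k := by rw [← div_pow]; congr 1; field_simp; ring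
  rw [div_lt_div_iff₀ two_pos (by positivity), one_mul] at half_lt
  calc (b + 1) ^ k < b ^ k * 2 := by exact_mod_cast half_lt
    _ ≤ b ^ k * p := by gcongr

lemma le_optimalExponent_iff (hk : k ≠ 0) (hp : 2 ≤ p) {b : ℕ} :
    b ≤ optimalExponent k p ↔ b ^ k * p ≤ (b + 1) ^ k := by
  refine ⟨fun h ↦ pow_mul_le_succ_pow_of_le h ?_, fun h ↦ Nat.le_findGreatest ?_ h⟩
  · exact Nat.findGreatest_spec (P := fun b ↦ b ^ k * p ≤ (b + 1) ^ k) (Nat.zero_le _)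
      (by simp [hk])
  · exact not_lt.1 fun hb ↦ (succ_pow_lt_pow_mul hp hb).not_ge h

lemma succ_pow_mul_pow_optimalExponent_le (hk : k ≠ 0) (hp : 2 ≤ p) (a : ℕ) :
    (a + 1) ^ k * p ^ optimalExponent k p ≤ (optimalExponent k p + 1) ^ k * p ^ a := by
  rcases le_total (optimalExponent k p) a with ha | ha
  · induction a, ha using Nat.le_induction with
    | base => rfl
    | succ a ha ih =>
      have hstep : (a + 2) ^ k ≤ (a + 1) ^ k * p :=
        (not_le.1 (mt (le_optimalExponent_iff hk hp).2 (by lia))).le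
      calc (a + 2) ^ k * p ^ optimalExponent k p
          ≤ (a + 1) ^ k * p * p ^ optimalExponent k p := by gcongr
        _ = (a + 1) ^ k * p ^ optimalExponent k p * p := by ring
        _ ≤ (optimalExponent k p + 1) ^ k * p ^ a * p := by gcongr
        _ = (optimalExponent k p + 1) ^ k * p ^ (a + 1) := by ring
  · induction ha using Nat.decreasingInduction with
    | self => rfl
    | of_succ a ha ih =>
      refine Nat.le_of_mul_le_mul_right ?_ (by lia : 0 < p)
      calc (a + 1) ^ k * p ^ optimalExponent k p * p
          = (a + 1) ^ k * p * p ^ optimalExponent k p := by ring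
        _ ≤ (a + 2) ^ k * p ^ optimalExponent k p := by
          gcongr; exact (le_optimalExponent_iff hk hp).1 ha
        _ ≤ (optimalExponent k p + 1) ^ k * p ^ (a + 1) := ih
        _ = (optimalExponent k p + 1) ^ k * p ^ a * p := by ring

lemma log_succ_sub_le_primeExcess (hk : k ≠ 0) (hp : 2 ≤ p) (a : ℕ) :
    log (a + 1) - a * (log p / k) ≤ primeExcess k p := by
  have hp0 : (0 : ℝ) < p := by positivity
  have hlog : k * log (a + 1) + optimalExponent k p * log p ≤
      k * log (optimalExponent k p + 1) + a * log p := by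
    have h : ((a : ℝ) + 1) ^ k * p ^ optimalExponent k p ≤
        (optimalExponent k p + 1) ^ k * p ^ a := by
      exact_mod_cast succ_pow_mul_pow_optimalExponent_le hk hp a
    simpa only [Real.log_mul (pow_ne_zero _ (Nat.cast_add_one_ne_zero _))
      (pow_ne_zero _ hp0.ne'), Real.log_pow] using Real.log_le_log (by positivity) h
  rw [primeExcess, ← sub_nonneg]
  field_simp
  linarith

lemma primeExcess_nonneg (hk : k ≠ 0) (hp : 2 ≤ p) : 0 ≤ primeExcess k p := by
  simpa using log_succ_sub_le_primeExcess hk hp 0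

lemma primeExcess_eq_zero (hk : k ≠ 0) (hp : 2 ^ k < p) : primeExcess k p = 0 := by
  have hp2 : 2 ≤ p := (Nat.le_self_pow hk 2).trans hp.le
  have hexp : optimalExponent k p = 0 := by
    rw [← Nat.lt_one_iff, ← not_le, le_optimalExponent_iff hk hp2]
    simpa using hp
  simp [primeExcess, hexp]

end OptimalExponent

theorem log_card_divisors_le {n k : ℕ} (hn : n ≠ 0) (hk : k ≠ 0) :
    log n.divisors.card ≤ log n / k + logExcess k := by
  have hcard : log n.divisors.card = ∑ p ∈ n.primeFactors, log (n.factorization p + 1) := by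
    rw [Nat.card_divisors hn, Nat.cast_prod, Real.log_prod fun p _ ↦ by positivity]
    push_cast
    rfl
  have hlog : log n / k = ∑ p ∈ n.primeFactors, n.factorization p * (log p / k) := by
    rw [Real.log_nat_eq_sum_factorization, Finsupp.sum, Nat.support_factorization, sum_div]
    exact sum_congr rfl fun p _ ↦ mul_div_assoc ..
  rw [← sub_le_iff_le_add', hcard, hlog, ← sum_sub_distrib]
  calc ∑ p ∈ n.primeFactors, (log (n.factorization p + 1) - n.factorization p * (log p / k))
      ≤ ∑ p ∈ n.primeFactors, primeExcess k p := sum_le_sum fun p hp ↦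
        log_succ_sub_le_primeExcess hk (Nat.prime_of_mem_primeFactors hp).two_le _
    _ ≤ logExcess k := by
      rw [← sum_filter_ne_zero]
      refine sum_le_sum_of_subset_of_nonneg (fun p hp ↦ ?_) fun p hp _ ↦
        primeExcess_nonneg hk (Nat.two_le_of_mem_primesLE hp)
      obtain ⟨hpn, hne⟩ := mem_filter.1 hp
      exact Nat.mem_primesLE.2
        ⟨not_lt.1 (mt (primeExcess_eq_zero hk) hne), Nat.prime_of_mem_primeFactors hpn⟩

section SmallParameter

lemma logExcess_le_of_pow_le {k m u : ℕ} (hk : k ≠ 0) (hm : m ≠ 0)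
    (h : (∏ p ∈ primesLE (2 ^ k), (optimalExponent k p + 1)) ^ (k * m) ≤
      2 ^ (k * u) * (∏ p ∈ primesLE (2 ^ k), p ^ optimalExponent k p) ^ m) :
    logExcess k ≤ u / m * log 2 := by
  set D := ∏ p ∈ primesLE (2 ^ k), (optimalExponent k p + 1) with hD
  set N := ∏ p ∈ primesLE (2 ^ k), p ^ optimalExponent k p with hN
  have hp0 : ∀ p ∈ primesLE (2 ^ k), (p : ℝ) ^ optimalExponent k p ≠ 0 := fun p hp ↦
    pow_ne_zero _ (Nat.cast_ne_zero.2 (Nat.prime_of_mem_primesLE hp).ne_zero)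
  have hD0 : (0 : ℝ) < D := by rw [hD]; positivity
  have hN0 : (N : ℝ) ≠ 0 := by rw [hN]; push_cast; exact prod_ne_zero_iff.2 hp0
  have hexcess : logExcess k = log D - log N / k := by
    rw [hD, hN, Nat.cast_prod, Nat.cast_prod, Real.log_prod fun p _ ↦ by positivity]
    push_cast
    rw [Real.log_prod hp0, sum_div, ← sum_sub_distrib]
    exact sum_congr rfl fun p _ ↦ by rw [primeExcess, Real.log_pow, mul_div_assoc]
  have hlog : k * m * log D ≤ k * u * log 2 + m * log N := by
    have h' : (D : ℝ) ^ (k * m) ≤ 2 ^ (k * u) * (N : ℝ) ^ m := by exact_mod_cast h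
    simpa [Real.log_mul, hN0] using Real.log_le_log (pow_pos hD0 _) h'
  rw [hexcess, ← sub_nonneg]
  field_simp
  linarith

lemma logExcess_two_le : logExcess 2 ≤ 4 / 5 * log 2 :=
  mod_cast logExcess_le_of_pow_le (u := 4) (m := 5) two_ne_zero (by decide) (by decide +kernel)

lemma logExcess_three_le : logExcess 3 ≤ 19 / 10 * log 2 :=
  mod_cast logExcess_le_of_pow_le (u := 19) (m := 10) three_ne_zero (by decide) (by decide +kernel)

lemma logExcess_four_le : logExcess 4 ≤ 31 / 10 * log 2 :=
  mod_cast logExcess_le_of_pow_le (u := 31) (m := 10) four_ne_zero (by decide) (by decide +kernel)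

lemma logExcess_five_le : logExcess 5 ≤ 49 / 10 * log 2 :=
  mod_cast logExcess_le_of_pow_le (u := 49) (m := 10) (by decide) (by decide) (by decide +kernel)

lemma logExcess_six_le : logExcess 6 ≤ 36 / 5 * log 2 :=
  mod_cast logExcess_le_of_pow_le (u := 36) (m := 5) (by decide) (by decide) (by decide +kernel)

end SmallParameter

section LargeParameter

open Chebyshev MeasureTheory in
lemma primeCounting_mul_log_sub_theta_le {α β x : ℝ} (hα : 0 ≤ α) (hx : 2 ≤ x)
    (h : ∀ m : ℕ, (m.primeCounting : ℝ) ≤ α * m + β) :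
    ⌊x⌋₊.primeCounting * log x - θ x ≤ α * (x - 2) + β * (log x - log 2) := by
  have hx0 : (0 : ℝ) ∉ Set.uIcc 2 x := Set.notMem_uIcc_of_lt two_pos (by linarith)
  have hinv : IntervalIntegrable (fun t : ℝ ↦ t⁻¹) volume 2 x :=
    intervalIntegrable_inv_iff.2 (Or.inr hx0)
  have hmono : Monotone fun t : ℝ ↦ (⌊t⌋₊.primeCounting : ℝ) := fun s t hst ↦
    Nat.cast_le.2 (Nat.monotone_primeCounting (Nat.floor_mono hst))
  have hπ : IntervalIntegrable (fun t : ℝ ↦ ⌊t⌋₊.primeCounting / t) volume 2 x :=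
    hmono.intervalIntegrable.mul_continuousOn
      (continuousOn_inv₀.mono fun t ht ↦ ne_of_mem_of_not_mem ht hx0)
  calc ⌊x⌋₊.primeCounting * log x - θ x
      = ∫ t in (2 : ℝ)..x, ⌊t⌋₊.primeCounting / t := by
        rw [theta_eq_primeCounting_mul_log_sub_integral hx, sub_sub_cancel]
    _ ≤ ∫ t in (2 : ℝ)..x, (α + β * t⁻¹) := by
        refine intervalIntegral.integral_mono_on hx hπ
          (intervalIntegrable_const.add (hinv.const_mul β)) fun t ht ↦ ?_
        have ht0 : 0 < t := two_pos.trans_le ht.1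
        rw [div_le_iff₀ ht0, add_mul, inv_mul_cancel_right₀ ht0.ne']
        grw [h, Nat.floor_le ht0.le]
    _ = α * (x - 2) + β * (log x - log 2) := by
        rw [intervalIntegral.integral_add intervalIntegrable_const (hinv.const_mul β),
          intervalIntegral.integral_const, intervalIntegral.integral_const_mul, integral_inv hx0,
          Real.log_div (by linarith) two_ne_zero, smul_eq_mul, mul_comm]

lemma primeCounting_le (m : ℕ) : (m.primeCounting : ℝ) ≤ 1 / 3 * m + 3 := by
  have h : 3 * m.primeCounting ≤ m + 9 := by
    have h6 : Nat.primeCounting 6 = 3 := by decide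
    have htot : Nat.totient 6 = 2 := by decide
    rcases le_total 6 m with hm | hm
    · obtain ⟨r, rfl⟩ := Nat.exists_eq_add_of_le hm
      have := Nat.primeCounting_add_le (a := 6) (by decide) le_rfl r
      lia
    · have := Nat.monotone_primeCounting hm
      lia
  have h' : (3 * m.primeCounting : ℝ) ≤ m + 9 := by exact_mod_cast h
  linarith

lemma sum_log_two_sub_le {k : ℕ} (hk : k ≠ 0) :
    ∑ p ∈ primesLE (2 ^ k), (log 2 - log p / k) ≤ (1 / 3 * 2 ^ k + 3 * (k * log 2)) / k := by
  have hk0 : (0 : ℝ) < k := by positivity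
  have hpow : (2 : ℝ) ≤ 2 ^ k := le_self_pow₀ one_le_two hk
  have h := primeCounting_mul_log_sub_theta_le (by norm_num) hpow primeCounting_le
  have hfloor : ⌊(2 : ℝ) ^ k⌋₊ = 2 ^ k := by exact_mod_cast Nat.floor_natCast (R := ℝ) (2 ^ k)
  rw [Chebyshev.theta_eq_sum_primesLE, hfloor, Real.log_pow] at h
  rw [sum_sub_distrib, sum_const, Nat.primesLE_card_eq_primeCounting, nsmul_eq_mul, ← sum_div,
    le_div_iff₀ hk0, sub_mul, div_mul_cancel₀ _ hk0.ne']
  linarith [Real.log_pos one_lt_two]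

lemma log_succ_sub_mul_le {k : ℕ} {t : ℝ} (hk : 8 ≤ k) (ht : log 2 / k ≤ t) (ht' : t ≤ log 2)
    (a : ℕ) : log (a + 1) - a * t ≤ log 2 - t + k / 8 := by
  have hk' : (8 : ℝ) ≤ k := by exact_mod_cast hk
  have hk0 : (0 : ℝ) < k := by linarith
  rcases Nat.eq_zero_or_pos a with rfl | ha
  · simp only [Nat.cast_zero, zero_add, Real.log_one, zero_mul, sub_zero]
    linarith
  have ha' : (0 : ℝ) ≤ a - 1 := sub_nonneg.2 (by exact_mod_cast ha)
  have hslope : 2 / (3 * k) ≤ t := by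
    refine le_trans ?_ ht
    rw [div_le_div_iff₀ (by positivity) hk0]
    nlinarith [Real.log_two_gt_d9]
  -- The inequality is tightest for `k` near `8` and `a + 1` near `k / log 2`. There the arguments
  -- of the last two logarithms are close to `1`, so `log x ≤ x - 1` loses little.
  have hfactor : log (a + 1) =
      log 2 + 3 * log 2 + log (3 * k / 32) + log ((a + 1) * (2 / (3 * k))) := by
    rw [← Nat.cast_ofNat (n := 3), ← Real.log_pow, ← Real.log_mul, ← Real.log_mul, ← Real.log_mul]
    · congr 1; push_cast; field_simp; ring
    all_goals positivity
  have htangent_k : log (3 * k / 32) ≤ 3 * k / 32 - 1 := log_le_sub_one_of_pos (by positivity)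
  have htangent_a : log ((a + 1) * (2 / (3 * k))) ≤ (a + 1) * (2 / (3 * k)) - 1 :=
    log_le_sub_one_of_pos (by positivity)
  have hrecip : 2 / (3 * k : ℝ) ≤ 1 / 12 := by
    rw [div_le_div_iff₀ (by positivity) (by norm_num)]
    linarith
  have := mul_le_mul_of_nonneg_left hslope ha'
  linarith [Real.log_two_lt_d9]

lemma primeExcess_le {k p : ℕ} (hk : 8 ≤ k) (hp : 2 ≤ p) (hpk : p ≤ 2 ^ k) :
    primeExcess k p ≤ log 2 - log p / k + if p ≤ 3 ^ k / 2 ^ k then (k : ℝ) / 8 else 0 := by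
  have hk0 : k ≠ 0 := by lia
  split_ifs with hsmall
  · refine log_succ_sub_mul_le hk ?_ ?_ _
    · gcongr; exact_mod_cast hp
    · rw [div_le_iff₀' (by positivity), ← Real.log_pow]
      exact Real.log_le_log (by positivity) (by exact_mod_cast hpk)
  · have hone : 1 ≤ optimalExponent k p := (le_optimalExponent_iff hk0 hp).2 (by simpa using hpk)
    have hlt_two : optimalExponent k p < 2 := by
      rw [← not_le, le_optimalExponent_iff hk0 hp, mul_comm]
      rwa [Nat.le_div_iff_mul_le (by positivity)] at hsmall
    rw [primeExcess, show optimalExponent k p = 1 by lia]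
    norm_num

lemma logExcess_le_sum {k : ℕ} (hk : 8 ≤ k) :
    logExcess k ≤ (1 / 3 * 2 ^ k + 3 * (k * log 2)) / k + (1 / 3 * (3 / 2) ^ k + 3) * (k / 8) := by
  have hcount : (#{p ∈ primesLE (2 ^ k) | p ≤ 3 ^ k / 2 ^ k} : ℝ) ≤ 1 / 3 * (3 / 2) ^ k + 3 := by
    have hsub : {p ∈ primesLE (2 ^ k) | p ≤ 3 ^ k / 2 ^ k} ⊆ primesLE (3 ^ k / 2 ^ k) := fun p hp ↦
      Nat.mem_primesLE.2 ⟨(mem_filter.1 hp).2, Nat.prime_of_mem_primesLE (mem_filter.1 hp).1⟩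
    calc (#{p ∈ primesLE (2 ^ k) | p ≤ 3 ^ k / 2 ^ k} : ℝ)
        ≤ primeCounting (3 ^ k / 2 ^ k) := by
          rw [← Nat.primesLE_card_eq_primeCounting]; exact_mod_cast card_le_card hsub
      _ ≤ 1 / 3 * (3 ^ k / 2 ^ k : ℕ) + 3 := primeCounting_le _
      _ ≤ 1 / 3 * (3 / 2) ^ k + 3 := by
          gcongr; rw [div_pow]; exact_mod_cast Nat.cast_div_le (α := ℝ)
  calc logExcess k
      ≤ ∑ p ∈ primesLE (2 ^ k),
          (log 2 - log p / k + if p ≤ 3 ^ k / 2 ^ k then (k : ℝ) / 8 else 0) :=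
        sum_le_sum fun p hp ↦
          primeExcess_le hk (Nat.two_le_of_mem_primesLE hp) (Nat.le_of_mem_primesLE hp)
    _ = ∑ p ∈ primesLE (2 ^ k), (log 2 - log p / k) +
          #{p ∈ primesLE (2 ^ k) | p ≤ 3 ^ k / 2 ^ k} * ((k : ℝ) / 8) := by
        rw [sum_add_distrib, ← sum_filter, sum_const, nsmul_eq_mul]
    _ ≤ (1 / 3 * 2 ^ k + 3 * (k * log 2)) / k + (1 / 3 * (3 / 2) ^ k + 3) * (k / 8) := by
        gcongr
        exact sum_log_two_sub_le (by lia)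

lemma sq_mul_three_pow_le {k : ℕ} (hk : 8 ≤ k) : 3 * k ^ 2 * 3 ^ k ≤ 20 * 4 ^ k := by
  induction k, hk using Nat.le_induction with
  | base => norm_num
  | succ k hk ih =>
    calc 3 * (k + 1) ^ 2 * 3 ^ (k + 1) = 3 * (3 * (k + 1) ^ 2) * 3 ^ k := by ring
      _ ≤ 3 * (4 * k ^ 2) * 3 ^ k := by gcongr 3 * ?_ * _; nlinarith
      _ = 4 * (3 * k ^ 2 * 3 ^ k) := by ring
      _ ≤ 4 * (20 * 4 ^ k) := by gcongr
      _ = 20 * 4 ^ (k + 1) := by ring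

lemma quadratic_le_two_pow {k : ℕ} (hk : 8 ≤ k) : 9 * k * (k + 6) ≤ 4 * 2 ^ k := by
  induction k, hk using Nat.le_induction with
  | base => norm_num
  | succ k hk ih =>
    rw [pow_succ]
    nlinarith

theorem logExcess_le_two_pow_div {k : ℕ} (hk : 8 ≤ k) : logExcess k ≤ 7 / 9 * 2 ^ k / k := by
  have hk0 : (0 : ℝ) < k := by positivity
  have hgeom : (k : ℝ) ^ 2 * (3 / 2) ^ k ≤ 20 / 3 * 2 ^ k := by
    have h : (3 * k ^ 2 * 3 ^ k : ℝ) ≤ 20 * 4 ^ k := by exact_mod_cast sq_mul_three_pow_le hk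
    rw [show (4 : ℝ) = 2 * 2 by norm_num, mul_pow] at h
    rw [div_pow, ← mul_div_assoc, div_le_iff₀ (by positivity)]
    linarith
  have hpoly : (9 * k * (k + 6) : ℝ) ≤ 4 * 2 ^ k := by exact_mod_cast quadratic_le_two_pow hk
  have hlog : k * log 2 ≤ k * 0.7 := by gcongr; linarith [Real.log_two_lt_d9]
  refine (logExcess_le_sum hk).trans ?_
  rw [le_div_iff₀ hk0, add_mul, div_mul_cancel₀ _ hk0.ne']
  linarith

end LargeParameter

section Tangent

lemma log_le_tangent_two_pow {x : ℝ} (hx : 0 < x) (j : ℕ) :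
    log x ≤ j * log 2 + x / 2 ^ j - 1 := by
  have h := log_le_sub_one_of_pos (x := x / 2 ^ j) (by positivity)
  rw [Real.log_div hx.ne' (by positivity), Real.log_pow] at h
  linarith

-- The difference of the two sides is convex in `x`.
lemma mul_affine_le_of_mem_Icc {ε C β γ δ A B x : ℝ} (hε : 0 ≤ ε) (hβ : 0 ≤ β)
    (hx : x ∈ Set.Icc A B) (hleft : (ε * A + C) * (γ + A * β) ≤ δ * A)
    (hright : (ε * B + C) * (γ + B * β) ≤ δ * B) :
    (ε * x + C) * (γ + x * β) ≤ δ * x := by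
  obtain ⟨hA, hB⟩ := hx
  rcases hA.eq_or_lt with rfl | hA
  · exact hleft
  have hAB : 0 < B - A := by linarith
  have hl := mul_le_mul_of_nonneg_left hleft (sub_nonneg.2 hB)
  have hr := mul_le_mul_of_nonneg_left hright (sub_nonneg.2 hA.le)
  have hconvex : 0 ≤ ε * β * ((x - A) * (B - x) * (B - A)) :=
    mul_nonneg (mul_nonneg hε hβ)
      (mul_nonneg (mul_nonneg (sub_nonneg.2 hA.le) (sub_nonneg.2 hB)) hAB.le)
  refine le_of_mul_le_mul_left ?_ hAB
  linarith

lemma mul_log_le_of_mem_Icc {ε C δ A B x : ℝ} (j : ℕ) (hε : 0 ≤ ε) (hC : 0 ≤ C) (hx0 : 0 < x)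
    (hx : x ∈ Set.Icc A B)
    (hleft : (ε * A + C) * (j * log 2 + A / 2 ^ j - 1) ≤ δ * A)
    (hright : (ε * B + C) * (j * log 2 + B / 2 ^ j - 1) ≤ δ * B) :
    (ε * x + C) * log x ≤ δ * x := by
  have htangent (y : ℝ) : j * log 2 + y / 2 ^ j - 1 = j * log 2 - 1 + y * (2 ^ j)⁻¹ := by ring
  rw [htangent] at hleft hright
  calc (ε * x + C) * log x ≤ (ε * x + C) * (j * log 2 + x / 2 ^ j - 1) := by
        gcongr; exact log_le_tangent_two_pow hx0 j
    _ = (ε * x + C) * (j * log 2 - 1 + x * (2 ^ j)⁻¹) := by rw [htangent]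
    _ ≤ δ * x := mul_affine_le_of_mem_Icc hε (by positivity) hx hleft hright

end Tangent

section LogRange

variable {n : ℕ}

lemma card_divisors_le_rpow_of_mem_Icc {k : ℕ} {C A B : ℝ} (j : ℕ) (hk : k ≠ 0)
    (hexcess : logExcess k ≤ C) (hC : 0 ≤ C) (hlog : 1 < log n) (hn : log n ∈ Set.Icc A B)
    (hleft : ((k : ℝ)⁻¹ * A + C) * (j * log 2 + A / 2 ^ j - 1) ≤ 1.6 * log 2 * A)
    (hright : ((k : ℝ)⁻¹ * B + C) * (j * log 2 + B / 2 ^ j - 1) ≤ 1.6 * log 2 * B) :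
    (n.divisors.card : ℝ) ≤ 2 ^ (1.6 * log n / log (log n)) := by
  have hn0 : n ≠ 0 := by rintro rfl; norm_num at hlog
  have hcard : (0 : ℝ) < n.divisors.card := by
    exact_mod_cast card_pos.2 (Nat.nonempty_divisors.2 hn0)
  have hloglog : 0 < log (log n) := Real.log_pos hlog
  rw [Real.le_rpow_iff_log_le hcard two_pos]
  calc log n.divisors.card ≤ (k : ℝ)⁻¹ * log n + C := by
        grw [log_card_divisors_le hn0 hk, hexcess, div_eq_inv_mul]
    _ ≤ 1.6 * log 2 * log n / log (log n) := (le_div_iff₀ hloglog).2 <|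
        mul_log_le_of_mem_Icc j (by positivity) hC (by linarith) hn hleft hright
    _ = 1.6 * log n / log (log n) * log 2 := by ring

lemma card_divisors_le_rpow_of_log_le (hlog : 1 < log n) (hn : log n ≤ 448) :
    (n.divisors.card : ℝ) ≤ 2 ^ (1.6 * log n / log (log n)) := by
  have hl := Real.log_two_gt_d9
  have hu := Real.log_two_lt_d9
  rcases le_total (log n) 5 with h5 | h5
  · exact card_divisors_le_rpow_of_mem_Icc 2 two_ne_zero logExcess_two_le (by positivity)
      hlog ⟨hlog.le, h5⟩ (by norm_num; nlinarith) (by norm_num; nlinarith)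
  rcases le_total (log n) (21 / 2) with h10 | h10
  · exact card_divisors_le_rpow_of_mem_Icc 3 three_ne_zero logExcess_three_le (by positivity)
      hlog ⟨h5, h10⟩ (by norm_num; nlinarith) (by norm_num; nlinarith)
  rcases le_total (log n) 23 with h23 | h23
  · exact card_divisors_le_rpow_of_mem_Icc 4 four_ne_zero logExcess_four_le (by positivity)
      hlog ⟨h10, h23⟩ (by norm_num; nlinarith) (by norm_num; nlinarith)
  rcases le_total (log n) 50 with h50 | h50
  · exact card_divisors_le_rpow_of_mem_Icc 5 (by decide) logExcess_five_le (by positivity)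
      hlog ⟨h23, h50⟩ (by norm_num; nlinarith) (by norm_num; nlinarith)
  rcases le_total (log n) 150 with h150 | h150
  · exact card_divisors_le_rpow_of_mem_Icc 6 (by decide) logExcess_six_le (by positivity)
      hlog ⟨h50, h150⟩ (by norm_num; nlinarith) (by norm_num; nlinarith)
  · exact card_divisors_le_rpow_of_mem_Icc 9 (by decide) logExcess_six_le (by positivity)
      hlog ⟨h150, hn⟩ (by norm_num; nlinarith) (by norm_num; nlinarith)

lemma card_divisors_le_rpow_of_le_log (hn : 448 ≤ log n) :
    (n.divisors.card : ℝ) ≤ 2 ^ (1.6 * log n / log (log n)) := by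
  obtain ⟨k, hlower, hupper⟩ := exists_nat_pow_near (x := log n * (4 / 7)) (y := (2 : ℝ))
    (by linarith) one_lt_two
  have hk : 8 ≤ k := by
    have h : (2 : ℝ) ^ 8 < 2 ^ (k + 1) := by linarith
    exact Nat.lt_succ_iff.1 ((pow_lt_pow_iff_right₀ one_lt_two).1 h)
  have hk8 : (8 : ℝ) ≤ k := by exact_mod_cast hk
  have hl := Real.log_two_gt_d9
  have hu := Real.log_two_lt_d9
  have endpoint {v : ℝ} (hv : (v + 7 / 9) * ((k + 1) * log 2 + v / 2 - 1) ≤ 1.6 * log 2 * v * k) :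
      ((k : ℝ)⁻¹ * (v * 2 ^ k) + 7 / 9 * 2 ^ k / k) *
        ((k + 1 : ℕ) * log 2 + v * 2 ^ k / 2 ^ (k + 1) - 1) ≤ 1.6 * log 2 * (v * 2 ^ k) := by
    calc _ = 2 ^ k / k * ((v + 7 / 9) * ((k + 1) * log 2 + v / 2 - 1)) := by
          rw [pow_succ]; push_cast; field_simp
      _ ≤ 2 ^ k / k * (1.6 * log 2 * v * k) := by gcongr
      _ = 1.6 * log 2 * (v * 2 ^ k) := by field_simp
  refine card_divisors_le_rpow_of_mem_Icc (A := 7 / 4 * 2 ^ k) (B := 7 / 2 * 2 ^ k) (k + 1)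
    (by lia) (logExcess_le_two_pow_div hk) (by positivity) (by linarith) ⟨by linarith, ?_⟩
    (endpoint ?_) (endpoint ?_)
  · rw [pow_succ] at hupper
    linarith
  · nlinarith [mul_nonneg (sub_nonneg.2 hk8) (sub_nonneg.2 hl.le)]
  · nlinarith [mul_nonneg (sub_nonneg.2 hk8) (sub_nonneg.2 hl.le)]

end LogRange

/-- For a positive integer `n ≥ 3`, the number of divisors of `n` is at most
`2^{1.6 ln n / ln ln n}`. -/
theorem divisor_bound (n : ℕ) (hn : 3 ≤ n) :
    (n.divisors.card : ℝ) ≤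
      (2 : ℝ) ^ (1.6 * Real.log n / Real.log (Real.log n)) := by
  have hlog : 1 < log n := by
    have : (3 : ℝ) ≤ n := by exact_mod_cast hn
    rw [Real.lt_log_iff_exp_lt (by positivity)]
    linarith [Real.exp_one_lt_three]
  rcases le_total (log n) 448 with h | h
  · exact card_divisors_le_rpow_of_log_le hlog h
  · exact card_divisors_le_rpow_of_le_log h
end

section
/- For every c ∈ {0,1}^n and c' ∈ B_k(c), the synchronization vector of c' lies in the 3k-deletion ball of the synchronization vector of c: 1_sync(c') ∈ B_{3k}(1_sync(c)). -/
/-- There is a run of `⌈log k⌉ + 5` consecutive 1's in `c` starting at (1-based) position `j`. -/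
def hasRun (k : ℕ) (c : List Bool) (j : ℕ) : Bool :=
  (List.range (Nat.clog 2 k + 5)).all fun t => c.getD (j + t - 1) false

/-- The window `(c_{i-3k+1}, …, c_{i+⌈log k⌉+4})` is a synchronization pattern: it lies inside
`c`, ends with `⌈log k⌉ + 5` consecutive 1's (starting at position `i`), and no run of
`⌈log k⌉ + 5` consecutive 1's starts at one of the first `3k - 1` window positions
(i.e. at a position `j` with `i - 3k + 1 ≤ j < i`). -/
def syncAt (k : ℕ) (c : List Bool) (i : ℕ) : Bool :=
  decide (3 * k ≤ i) && decide (i + Nat.clog 2 k + 4 ≤ c.length) && hasRun k c i &&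
    ((List.range' (i - 3 * k + 1) (i - (i - 3 * k + 1))).all fun j => !hasRun k c j)

/-- The synchronization vector of `c`: its `i`-th (1-based) entry is 1 iff a synchronization
pattern occurs at position `i`. -/
def syncVec (k : ℕ) (c : List Bool) : List Bool :=
  (List.range c.length).map fun idx => syncAt k c (idx + 1)

/-! Delete the bit at position `p`, and call `t ≥ p` a mismatch if exactly one of the positions
`t + 1` before and `t` after the deletion is a synchronization position. After the deletion, no run
starts in `[p, t)`: beyond such a run, synchronization no longer depends on the bits up to `p`. A
synchronization position whose run straddles `p` cannot coexist with a second one at the mismatch: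
deleting any bit of a run of 1's amounts to deleting its first bit, and inserting a bit inside a run
creates, up to the shift, no new run past its start; so the second one would occur in both vectors.
Hence the two synchronization vectors agree up to a shift outside a window around `p` that ends at
the last mismatch and holds at most one 1 of each vector; two deletions and one insertion equalize
the windows.

Relating words by `i` deletions and `j` insertions is transitive and additive in `i` and `j`, so `k`
deletions followed by `k` insertions cost at most `2k + k` deletions and `k + 2k` insertions. -/

section DelInsRel

variable {α β : Type*} {i j : ℕ}

/-- The relation between words that `v` arises from `u` by at most `i` deletions followed by at
most `j` insertions. It is encoded by a common subsequence that misses at most `i` letters of `u`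
and at most `j` letters of `v`. -/
def DelInsRel (i j : ℕ) (u v : List α) : Prop :=
  ∃ d : List α, d.Sublist u ∧ d.Sublist v ∧ u.length ≤ d.length + i ∧ v.length ≤ d.length + j

theorem exists_common_sublist_of_sublist {u v y : List α} (hu : u.Sublist y) (hv : v.Sublist y) :
    ∃ d : List α, d.Sublist u ∧ d.Sublist v ∧ u.length + v.length ≤ d.length + y.length := by
  induction y generalizing u v with
  | nil =>
    obtain rfl := List.sublist_nil.1 hu
    exact ⟨[], List.nil_sublist _, List.nil_sublist _, by simp [List.sublist_nil.1 hv]⟩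
  | cons a y ih =>
    rcases List.sublist_cons_iff.1 hu with hu' | ⟨u, rfl, hu'⟩ <;>
    rcases List.sublist_cons_iff.1 hv with hv' | ⟨v, rfl, hv'⟩ <;>
    obtain ⟨d, hdu, hdv, hlen⟩ := ih hu' hv' <;>
    simp only [List.length_cons]
    · exact ⟨d, hdu, hdv, by omega⟩
    · exact ⟨d, hdu, hdv.cons a, by omega⟩
    · exact ⟨d, hdu.cons a, hdv, by omega⟩
    · exact ⟨a :: d, hdu.cons_cons a, hdv.cons_cons a, by simp only [List.length_cons]; omega⟩

namespace DelInsRel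

theorem refl (u : List α) : DelInsRel 0 0 u u :=
  ⟨u, .refl u, .refl u, le_rfl, le_rfl⟩

theorem symm {u v : List α} : DelInsRel i j u v → DelInsRel j i v u
  | ⟨d, hdu, hdv, hu, hv⟩ => ⟨d, hdv, hdu, hv, hu⟩

theorem trans {u v w : List α} {i' j' : ℕ} (huv : DelInsRel i j u v) (hvw : DelInsRel i' j' v w) :
    DelInsRel (i + i') (j + j') u w := by
  obtain ⟨d, hdu, hdv, hu, hv⟩ := huv
  obtain ⟨e, hev, hew, hv', hw⟩ := hvw
  obtain ⟨x, hxd, hxe, hx⟩ := exists_common_sublist_of_sublist hdv hev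
  exact ⟨x, hxd.trans hdu, hxe.trans hew, by omega, by omega⟩

theorem mono {u v : List α} {i' j' : ℕ} (h : DelInsRel i j u v) (hi : i ≤ i') (hj : j ≤ j') :
    DelInsRel i' j' u v := by
  obtain ⟨d, hdu, hdv, hu, hv⟩ := h
  exact ⟨d, hdu, hdv, by omega, by omega⟩

theorem append_append (l r : List α) {u v : List α} (h : DelInsRel i j u v) :
    DelInsRel i j (l ++ u ++ r) (l ++ v ++ r) := by
  obtain ⟨d, hdu, hdv, hu, hv⟩ := h
  refine ⟨l ++ d ++ r, ((List.Sublist.refl l).append hdu).append (.refl r),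
    ((List.Sublist.refl l).append hdv).append (.refl r), ?_, ?_⟩ <;>
  · simp only [List.length_append]
    omega

theorem iff_of_length_eq {u v : List α} {n : ℕ} (hu : u.length = n) (hv : v.length = n) :
    DelInsRel i i u v ↔ ∃ d : List α, d.length = n - i ∧ d.Sublist u ∧ d.Sublist v := by
  constructor
  · rintro ⟨d, hdu, hdv, hd, -⟩
    exact ⟨d.take (n - i), by rw [List.length_take]; omega,
      (List.take_sublist _ _).trans hdu, (List.take_sublist _ _).trans hdv⟩
  · rintro ⟨d, hd, hdu, hdv⟩
    exact ⟨d, hdu, hdv, by omega, by omega⟩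

section Map

variable {F : List α → List β} (hF : ∀ u x v, DelInsRel i j (F (u ++ x :: v)) (F (u ++ v)))

include hF

theorem map_of_sublist {d c : List α} (h : d.Sublist c) (u : List α) :
    DelInsRel (i * (c.length - d.length)) (j * (c.length - d.length))
      (F (u ++ c)) (F (u ++ d)) := by
  induction h generalizing u with
  | slnil => exact refl _
  | @cons d c x h ih =>
    have hlen : (x :: c).length - d.length = 1 + (c.length - d.length) := by
      have := h.length_le
      rw [List.length_cons]
      omega
    rw [hlen, mul_add, mul_add, mul_one, mul_one]
    exact (hF u x c).trans (ih u)
  | @cons_cons d c x _ ih => simpa using ih (u ++ [x])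

theorem map {m n : ℕ} {u v : List α} (h : DelInsRel m n u v) :
    DelInsRel (i * m + j * n) (i * n + j * m) (F u) (F v) := by
  obtain ⟨d, hdu, hdv, hu, hv⟩ := h
  have hFu : DelInsRel (i * m) (j * m) (F u) (F d) :=
    (map_of_sublist hF hdu []).mono (Nat.mul_le_mul_left _ (by omega))
      (Nat.mul_le_mul_left _ (by omega))
  have hFv : DelInsRel (i * n) (j * n) (F v) (F d) :=
    (map_of_sublist hF hdv []).mono (Nat.mul_le_mul_left _ (by omega))
      (Nat.mul_le_mul_left _ (by omega))
  rw [add_comm (i * n)]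
  exact hFu.trans hFv.symm

end Map

theorem of_count_true_le_one {u v : List Bool} (hlen : u.length = v.length + 1)
    (hu : u.count true ≤ 1) (hv : v.count true ≤ 1) : DelInsRel 2 1 u v := by
  have hcu := u.count_false_add_count_true
  have hcv := v.count_false_add_count_true
  refine ⟨List.replicate (v.length - 1) false, List.replicate_sublist_iff.2 (by omega),
    List.replicate_sublist_iff.2 (by omega), ?_, ?_⟩ <;>
  · rw [List.length_replicate]
    omega

end DelInsRel

theorem count_true_map_range_le_one {s : ℕ → Bool} {a m : ℕ}
    (h : (Set.Ico a (a + m) ∩ {x | s x = true}).Subsingleton) :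
    ((List.range m).map fun x => s (a + x)).count true ≤ 1 := by
  have hcount : ((List.range m).map fun x => s (a + x)).count true =
      Nat.count (fun x => s (a + x) = true) m := by
    simp [List.count, List.countP_map, Nat.count, Function.comp_def]
  rw [hcount, Nat.count_eq_card_filter_range, Finset.card_le_one]
  intro x hx y hy
  rw [Finset.mem_filter, Finset.mem_range] at hx hy
  exact Nat.add_left_cancel
    (h ⟨⟨by omega, by omega⟩, hx.2⟩ ⟨⟨by omega, by omega⟩, hy.2⟩)

theorem DelInsRel.map_range_of_subsingleton {s t : ℕ → Bool} {a b N : ℕ} (hab : a ≤ b) (hbN : b ≤ N)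
    (hlt : ∀ x < a, s x = t x) (hge : ∀ x, b ≤ x → s (x + 1) = t x)
    (hs : (Set.Ico a (b + 1) ∩ {x | s x = true}).Subsingleton)
    (ht : (Set.Ico a b ∩ {x | t x = true}).Subsingleton) :
    DelInsRel 2 1 ((List.range (N + 1)).map s) ((List.range N).map t) := by
  obtain ⟨m, rfl⟩ := Nat.exists_eq_add_of_le hab
  obtain ⟨r, rfl⟩ := Nat.exists_eq_add_of_le hbN
  have hprefix : (List.range a).map s = (List.range a).map t :=
    List.map_congr_left fun x hx => hlt x (List.mem_range.1 hx)
  have hsuffix : (List.range r).map (fun x => s (a + (m + 1) + x)) =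
      (List.range r).map fun x => t (a + m + x) :=
    List.map_congr_left fun x _ => by rw [← hge _ (by omega)]; congr 1; omega
  have hsplit : ∀ (f : ℕ → Bool) (l : ℕ), (List.range (a + l + r)).map f =
      (List.range a).map f ++ (List.range l).map (fun x => f (a + x)) ++
        (List.range r).map fun x => f (a + l + x) := fun f l => by
    simp only [List.range_add, List.map_append, List.map_map, Function.comp_def, Nat.add_assoc,
      List.append_assoc]
  rw [show a + m + r + 1 = a + (m + 1) + r by omega, hsplit s, hsplit t, hprefix, hsuffix]
  exact (of_count_true_le_one (by simp) (count_true_map_range_le_one (m := m + 1) hs)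
    (count_true_map_range_le_one ht)).append_append _ _

end DelInsRel

/-- `g` is the infinite word obtained from `f` by deleting its entry at the (0-based) position
`p`. -/
structure IsDeletionAt {α : Type*} (p : ℕ) (f g : ℕ → α) : Prop where
  eq_of_lt : ∀ x < p, g x = f x
  eq_succ_of_le : ∀ x, p ≤ x → g x = f (x + 1)

theorem isDeletionAt_getD {α : Type*} (u v : List α) (a d : α) :
    IsDeletionAt u.length (fun x => (u ++ a :: v).getD x d) (fun x => (u ++ v).getD x d) where
  eq_of_lt x hx := by
    rw [List.getD_append _ _ _ _ hx, List.getD_append _ _ _ _ hx]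
  eq_succ_of_le x hx := by
    rw [List.getD_append_right _ _ _ _ hx, List.getD_append_right _ _ _ _ (by omega),
      Nat.sub_add_comm hx, List.getD_cons_succ]

/-- A run of `L` consecutive 1's starts at the (0-based) position `x` of `f`. -/
def IsRunAt (L : ℕ) (f : ℕ → Bool) (x : ℕ) : Prop :=
  ∀ s < L, f (x + s) = true

/-- A synchronization pattern with runs of length `L` and window parameter `w` (which is `3k` in the
paper) occurs at the (0-based) position `x` of `f`: a run starts at `x`, no run starts at the
`w - 1` positions before `x`, and these positions all exist. -/
def IsSyncAt (L w : ℕ) (f : ℕ → Bool) (x : ℕ) : Prop :=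
  w ≤ x + 1 ∧ IsRunAt L f x ∧ ∀ y < x, x < y + w → ¬ IsRunAt L f y

section Sync

variable {L w p j t x y : ℕ} {f g : ℕ → Bool}

theorem IsSyncAt.add_le (hy : IsSyncAt L w f y) (hx : IsRunAt L f x) (hxy : x < y) : x + w ≤ y :=
  le_of_not_gt fun h => hy.2.2 x hxy h hx

theorem IsSyncAt.eq_of_le (hw : 2 ≤ w) (hy : IsSyncAt L w f y) (hx : IsRunAt L f x)
    (hxy : x ≤ y) (hyx : y ≤ x + L) : x = y := by
  by_contra hne
  have hpred : IsRunAt L f (y - 1) := fun s hs => by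
    rcases s.eq_zero_or_pos with rfl | hpos
    · have := hx (y - 1 - x) (by omega)
      rwa [show x + (y - 1 - x) = y - 1 + 0 by omega] at this
    · have := hy.2.1 (s - 1) (by omega)
      rwa [show y + (s - 1) = y - 1 + s by omega] at this
  exact hy.2.2 (y - 1) (by omega) (by omega) hpred

theorem subsingleton_isSyncAt_Icc (hw : 2 ≤ w) (f : ℕ → Bool) (a : ℕ) :
    (Set.Icc a (a + L) ∩ {x | IsSyncAt L w f x}).Subsingleton := by
  rintro x ⟨⟨hax, hxa⟩, hx⟩ y ⟨⟨hay, hya⟩, hy⟩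
  rcases le_total x y with hxy | hyx
  · exact hy.eq_of_le hw hx.2.1 hxy (by omega)
  · exact (hx.eq_of_le hw hy.2.1 hyx (by omega)).symm

theorem IsSyncAt.succ_of_isRunAt (ht : IsSyncAt L w g t) (hrun : IsRunAt L f (t + 1))
    (h : ∀ y < t, t < y + w → IsRunAt L f (y + 1) → IsRunAt L g y) : IsSyncAt L w f (t + 1) := by
  obtain ⟨hwt, -, hno⟩ := ht
  refine ⟨by omega, hrun, fun y hyt hty hy => ?_⟩
  obtain ⟨y, rfl⟩ : ∃ z, y = z + 1 := ⟨y - 1, by omega⟩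
  exact hno y (by omega) (by omega) (h y (by omega) (by omega) hy)

namespace IsDeletionAt

theorem isRunAt_iff_of_add_le (h : IsDeletionAt p f g) (hx : x + L ≤ p) :
    IsRunAt L g x ↔ IsRunAt L f x :=
  forall₂_congr fun s hs => by rw [h.eq_of_lt _ (by omega)]

theorem isRunAt_iff_succ_of_le (h : IsDeletionAt p f g) (hx : p ≤ x) :
    IsRunAt L g x ↔ IsRunAt L f (x + 1) :=
  forall₂_congr fun s _ => by rw [h.eq_succ_of_le _ (by omega), Nat.add_right_comm]

theorem isSyncAt_iff_of_add_le (h : IsDeletionAt p f g) (hx : x + L ≤ p) :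
    IsSyncAt L w g x ↔ IsSyncAt L w f x :=
  and_congr_right fun _ => and_congr (h.isRunAt_iff_of_add_le hx) <|
    forall₂_congr fun y hy => by rw [h.isRunAt_iff_of_add_le (by omega)]

theorem isSyncAt_iff_succ_of_add_le (h : IsDeletionAt p f g) (hpt : p ≤ t) (hwt : p + w ≤ t + 1) :
    IsSyncAt L w g t ↔ IsSyncAt L w f (t + 1) := by
  constructor
  · intro ht
    exact ht.succ_of_isRunAt ((h.isRunAt_iff_succ_of_le hpt).1 ht.2.1) fun y _ hty =>
      (h.isRunAt_iff_succ_of_le (by omega)).2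
  · rintro ⟨-, hrun, hno⟩
    refine ⟨by omega, (h.isRunAt_iff_succ_of_le hpt).2 hrun, fun y hyt hty hy => ?_⟩
    exact hno (y + 1) (by omega) (by omega) ((h.isRunAt_iff_succ_of_le (by omega)).1 hy)

theorem isSyncAt_iff_succ_of_isRunAt (h : IsDeletionAt p f g) (hpx : p ≤ x)
    (hx : IsRunAt L g x) (hxt : x < t) : IsSyncAt L w g t ↔ IsSyncAt L w f (t + 1) := by
  have hfx : IsRunAt L f (x + 1) := (h.isRunAt_iff_succ_of_le hpx).1 hx
  by_cases htx : x + w ≤ t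
  · exact h.isSyncAt_iff_succ_of_add_le (by omega) (by omega)
  · refine iff_of_false (fun ht => htx (ht.add_le hx hxt)) fun ht => htx ?_
    have := ht.add_le hfx (by omega)
    omega

theorem start_of_isRunAt (h : IsDeletionAt p f g) (hj : IsRunAt L f j) (hjp : j ≤ p)
    (hpj : p < j + L) : IsDeletionAt j f g where
  eq_of_lt x hx := h.eq_of_lt x (by omega)
  eq_succ_of_le x hx := by
    rcases lt_or_ge x p with hxp | hpx
    · have hfx := hj (x - j) (by omega)
      have hfx' := hj (x + 1 - j) (by omega)
      rw [Nat.add_sub_of_le (by omega)] at hfx hfx'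
      rw [h.eq_of_lt x hxp, hfx, hfx']
    · exact h.eq_succ_of_le x hpx

theorem isRunAt_of_succ (h : IsDeletionAt p f g) (hj : IsRunAt L g j) (hpj : p < j + L)
    (hjx : j ≤ x) (hx : IsRunAt L f (x + 1)) : IsRunAt L g x := fun s hs => by
  rcases lt_or_ge (x + s) (j + L) with hlt | hge
  · have := hj (x + s - j) (by omega)
    rwa [Nat.add_sub_of_le (by omega)] at this
  · rw [h.eq_succ_of_le _ (by omega), Nat.add_right_comm]
    exact hx s hs

theorem isSyncAt_of_isSyncAt_succ (h : IsDeletionAt p f g) (hjp : j ≤ p) (hpj : p < j + L)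
    (hj : IsRunAt L f j) (hpt : p ≤ t) (ht : IsSyncAt L w f (t + 1)) : IsSyncAt L w g t :=
  ((h.start_of_isRunAt hj hjp hpj).isSyncAt_iff_succ_of_add_le (by omega)
    (ht.add_le hj (by omega))).2 ht

theorem isSyncAt_succ_of_isSyncAt (h : IsDeletionAt p f g) (hjp : j < p) (hpj : p < j + L)
    (hj : IsRunAt L g j) (hpt : p ≤ t) (ht : IsSyncAt L w g t) : IsSyncAt L w f (t + 1) := by
  have hjt : j + w ≤ t := ht.add_le hj (by omega)
  exact ht.succ_of_isRunAt ((h.isRunAt_iff_succ_of_le hpt).1 ht.2.1) fun y _ hty =>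
    h.isRunAt_of_succ hj hpj (by omega)

section Mismatch

variable (h : IsDeletionAt p f g) (hpt : p ≤ t)
  (hmis : ¬ (IsSyncAt L w g t ↔ IsSyncAt L w f (t + 1)))

include h hmis

theorem not_isRunAt_of_mismatch (hpx : p ≤ x) (hxt : x < t) : ¬ IsRunAt L g x :=
  fun hx => hmis (h.isSyncAt_iff_succ_of_isRunAt hpx hx hxt)

include hpt

theorem subsingleton_isSyncAt_before_of_mismatch (hw : 2 ≤ w) :
    (Set.Ico (p + 1 - L) (t + 2) ∩ {x | IsSyncAt L w f x}).Subsingleton := by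
  have hle : ∀ x ≤ t, IsSyncAt L w f x → x ≤ p := fun x hxt hx => by
    by_contra! hpx
    obtain ⟨x, rfl⟩ : ∃ z, x = z + 1 := ⟨x - 1, by omega⟩
    exact h.not_isRunAt_of_mismatch hmis (by omega) hxt
      ((h.isRunAt_iff_succ_of_le (by omega)).2 hx.2.1)
  by_cases hf : IsSyncAt L w f (t + 1)
  · refine Set.subsingleton_of_forall_eq (t + 1) ?_
    rintro x ⟨⟨hax, hxt⟩, hx⟩
    by_contra hne
    have hxp : x ≤ p := hle x (by omega) hx
    exact hmis (iff_of_true (h.isSyncAt_of_isSyncAt_succ hxp (by omega) hx.2.1 hpt hf) hf)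
  · refine (subsingleton_isSyncAt_Icc (L := L) hw f (p + 1 - L)).anti ?_
    rintro x ⟨⟨hax, hxt⟩, hx⟩
    have hne : x ≠ t + 1 := fun heq => hf (heq ▸ hx)
    have hxp : x ≤ p := hle x (by omega) hx
    exact ⟨⟨hax, by omega⟩, hx⟩

theorem subsingleton_isSyncAt_after_of_mismatch (hw : 2 ≤ w) :
    (Set.Ico (p + 1 - L) (t + 1) ∩ {x | IsSyncAt L w g x}).Subsingleton := by
  have hlt : ∀ x < t, IsSyncAt L w g x → x < p := fun x hxt hx => by
    by_contra! hpx
    exact h.not_isRunAt_of_mismatch hmis hpx hxt hx.2.1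
  by_cases hg : IsSyncAt L w g t
  · refine Set.subsingleton_of_forall_eq t ?_
    rintro x ⟨⟨hax, hxt⟩, hx⟩
    by_contra hne
    have hxp : x < p := hlt x (by omega) hx
    exact hmis (iff_of_true hg (h.isSyncAt_succ_of_isSyncAt hxp (by omega) hx.2.1 hpt hg))
  · refine (subsingleton_isSyncAt_Icc (L := L) hw g (p + 1 - L)).anti ?_
    rintro x ⟨⟨hax, hxt⟩, hx⟩
    have hne : x ≠ t := fun heq => hg (heq ▸ hx)
    have hxp : x < p := hlt x (by omega) hx
    exact ⟨⟨hax, by omega⟩, hx⟩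

end Mismatch

theorem exists_window_subsingleton_isSyncAt (h : IsDeletionAt p f g) (hw : 2 ≤ w) {N : ℕ}
    (hpN : p ≤ N) (hN : ∀ x, N ≤ x → ¬ IsRunAt L g x) :
    ∃ b, p ≤ b ∧ b ≤ N ∧ (∀ x, b ≤ x → (IsSyncAt L w g x ↔ IsSyncAt L w f (x + 1))) ∧
      (Set.Ico (p + 1 - L) (b + 1) ∩ {x | IsSyncAt L w f x}).Subsingleton ∧
      (Set.Ico (p + 1 - L) b ∩ {x | IsSyncAt L w g x}).Subsingleton := by
  classical
  have hclose (e : ℕ → Bool) :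
      (Set.Ico (p + 1 - L) (p + 1) ∩ {x | IsSyncAt L w e x}).Subsingleton :=
    (subsingleton_isSyncAt_Icc (L := L) hw e (p + 1 - L)).anti <|
      Set.inter_subset_inter_left _ fun x hx => ⟨hx.1, by have := hx.2; omega⟩
  have hmatchN : ∀ x, N ≤ x → (IsSyncAt L w g x ↔ IsSyncAt L w f (x + 1)) := fun x hx =>
    iff_of_false (fun hg => hN x hx hg.2.1)
      fun hf => hN x hx ((h.isRunAt_iff_succ_of_le (by omega)).2 hf.2.1)
  have hex : ∃ b, p ≤ b ∧ ∀ x, b ≤ x → (IsSyncAt L w g x ↔ IsSyncAt L w f (x + 1)) :=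
    ⟨N, hpN, hmatchN⟩
  obtain ⟨hpb, hmatch⟩ := Nat.find_spec hex
  refine ⟨Nat.find hex, hpb, Nat.find_min' hex ⟨hpN, hmatchN⟩, hmatch, ?_⟩
  rcases hpb.eq_or_lt with hb | hb
  · rw [← hb]
    exact ⟨hclose f, (hclose g).anti <|
      Set.inter_subset_inter_left _ (Set.Ico_subset_Ico_right (Nat.le_succ p))⟩
  · obtain ⟨t, ht⟩ : ∃ t, Nat.find hex = t + 1 := ⟨Nat.find hex - 1, by omega⟩
    have hpt : p ≤ t := by omega
    have hmis : ¬ (IsSyncAt L w g t ↔ IsSyncAt L w f (t + 1)) := fun hiff =>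
      Nat.find_min hex (show t < Nat.find hex by omega) ⟨hpt, fun x hx =>
        hx.eq_or_lt.elim (fun heq => heq ▸ hiff) fun hlt => hmatch x (by omega)⟩
    rw [ht]
    exact ⟨h.subsingleton_isSyncAt_before_of_mismatch hpt hmis hw,
      h.subsingleton_isSyncAt_after_of_mismatch hpt hmis hw⟩

end IsDeletionAt

end Sync

theorem hasRun_succ_iff (k : ℕ) (c : List Bool) (x : ℕ) :
    hasRun k c (x + 1) = true ↔ IsRunAt (Nat.clog 2 k + 5) (fun y => c.getD y false) x := by
  have hindex : ∀ s, x + 1 + s - 1 = x + s := fun s => by omega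
  simp only [hasRun, IsRunAt, List.all_eq_true, List.mem_range, hindex]

theorem IsRunAt.add_le_length {L : ℕ} (hL : 0 < L) {c : List Bool} {x : ℕ}
    (h : IsRunAt L (fun y => c.getD y false) x) : x + L ≤ c.length := by
  by_contra! hlt
  have hlast : c.getD (x + (L - 1)) false = true := h (L - 1) (by omega)
  rw [List.getD_eq_default _ _ (by omega)] at hlast
  exact Bool.false_ne_true hlast

theorem syncAt_succ_iff (k : ℕ) (c : List Bool) (x : ℕ) :
    syncAt k c (x + 1) = true ↔
      IsSyncAt (Nat.clog 2 k + 5) (3 * k) (fun y => c.getD y false) x := by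
  simp only [syncAt, IsSyncAt, Bool.and_eq_true, decide_eq_true_eq, List.all_eq_true,
    List.mem_range'_1, hasRun_succ_iff, Bool.not_eq_true', ← Bool.not_eq_true]
  constructor
  · rintro ⟨⟨⟨hwx, -⟩, hrun⟩, hno⟩
    refine ⟨hwx, hrun, fun y hyx hxy hy => ?_⟩
    exact hno (y + 1) (by omega) ((hasRun_succ_iff k c y).2 hy)
  · rintro ⟨hwx, hrun, hno⟩
    have hlen := hrun.add_le_length (by omega)
    refine ⟨⟨⟨hwx, by omega⟩, hrun⟩, fun y hy => ?_⟩
    obtain ⟨y, rfl⟩ : ∃ z, y = z + 1 := ⟨y - 1, by omega⟩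
    rw [hasRun_succ_iff]
    exact hno y (by omega) (by omega)

theorem length_syncVec (k : ℕ) (c : List Bool) : (syncVec k c).length = c.length := by
  simp [syncVec]

theorem delInsRel_syncVec_append_cons {k : ℕ} (hk : 1 ≤ k) (u : List Bool) (a : Bool)
    (v : List Bool) : DelInsRel 2 1 (syncVec k (u ++ a :: v)) (syncVec k (u ++ v)) := by
  have hdel := isDeletionAt_getD u v a false
  obtain ⟨b, hpb, hbN, hge, hf, hg⟩ := hdel.exists_window_subsingleton_isSyncAt
    (L := Nat.clog 2 k + 5) (w := 3 * k) (N := (u ++ v).length) (by omega) (by simp)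
    fun x hx hrun => by
      have := hrun.add_le_length (by omega)
      omega
  have hlt : ∀ x < u.length + 1 - (Nat.clog 2 k + 5),
      (IsSyncAt (Nat.clog 2 k + 5) (3 * k) (fun y => (u ++ v).getD y false) x ↔
        IsSyncAt (Nat.clog 2 k + 5) (3 * k) (fun y => (u ++ a :: v).getD y false) x) :=
    fun x hx => hdel.isSyncAt_iff_of_add_le (by omega)
  simp only [← syncAt_succ_iff] at hlt hge hf hg
  have hlen : (u ++ a :: v).length = (u ++ v).length + 1 := by simp [Nat.add_assoc]
  rw [syncVec, syncVec, hlen]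
  exact .map_range_of_subsingleton (by omega) hbN (fun x hx => Bool.eq_iff_iff.2 (hlt x hx).symm)
    (fun x hx => Bool.eq_iff_iff.2 (hge x hx).symm) hf hg

theorem syncVec_in_ball_general {k i j : ℕ} (hk : 1 ≤ k) {c c' : List Bool}
    (h : DelInsRel i j c c') :
    DelInsRel (2 * i + j) (2 * j + i) (syncVec k c) (syncVec k c') := by
  simpa only [one_mul] using h.map (delInsRel_syncVec_append_cons hk)

/-- For every `c ∈ {0,1}^n` and `c' ∈ B_k(c)`, the synchronization vector of `c'` lies in the
`3k`-deletion ball of the synchronization vector of `c`. -/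
theorem syncVec_in_ball (n k : ℕ) (hk : 1 ≤ k) (c c' : List Bool)
    (hc : c.length = n) (hc' : c'.length = n)
    (hball : ∃ d : List Bool, d.length = n - k ∧ d.Sublist c ∧ d.Sublist c') :
    ∃ d : List Bool, d.length = n - 3 * k ∧
      d.Sublist (syncVec k c) ∧ d.Sublist (syncVec k c') := by
  have h := syncVec_in_ball_general hk ((DelInsRel.iff_of_length_eq hc hc').2 hball)
  rw [show 2 * k + k = 3 * k by ring] at h
  exact (DelInsRel.iff_of_length_eq (by simp [length_syncVec, hc])
    (by simp [length_syncVec, hc'])).1 h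
end
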